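/- Suppose the sequences γ = (r_k)_{k≥0}, σ = (s_k)_{k≥0}, τ = (t_k)_{k≥1} of q-nonnegative polynomials satisfy at least one of the following five conditions: (1) s_0 ≥_q r_0 and s_k ≥_q r_k + t_k for all k ≥ 1; (2) s_0 ≥_q t_1 and s_k ≥_q r_{k−1} + t_{k+1} for all k ≥ 1; (3) s_0 ≥_q 1 and s_k ≥_q r_{k−1}·t_k + 1 for all k ≥ 1; (4) s_0 ≥_q r_0·t_1 and s_k ≥_q r_k·t_{k+1} + 1 for all k ≥ 1; (5) there exist q-nonnegative polynomials b_k, c_k with r_k = 1, s_k = b_k + c_k, t_{k+1} = b_{k+1}·c_k for all k ≥ 0. Let a_k := c_{k,0}. Then for all integers 0 ≤ i_1 < i_2 < i_3 and 0 ≤ j_1 < j_2 < j_3, the polynomial 2(a_{i_1+j_2}·a_{i_2+j_1}·a_{i_3+j_3} + a_{i_1+j_3}·a_{i_2+j_2}·a_{i_3+j_1} + a_{i_1+j_1}·a_{i_2+j_3}·a_{i_3+j_2}) − 3(a_{i_1+j_2}·a_{i_2+j_3}·a_{i_3+j_1} + a_{i_1+j_3}·a_{i_2+j_1}·a_{i_3+j_2})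 is q-nonnegative. -/

import Mathlib

/-!
The polynomial in question is the monomial immanant of shape `(2,1)` of the `3 × 3` submatrix
`M a b = a_{i_a + j_b}` of a Hankel matrix. It is a nonnegative combination of Temperley–Lieb
immanants, namely `2 (f_{T₁} + f_{T₂}) + f_{T₁T₂} + f_{T₂T₁}`, so it suffices that these are
`q`-nonnegative on the Hankel matrix.

Nonnegativity of Temperley–Lieb immanants is preserved by matrix products (`TLNonneg.mul`). Indeed
`M ↦ ∑ w, (∏ a, M a (w a)) w` satisfies a Cauchy–Binet formula over weakly increasing triples of
intermediate indices, and the Temperley–Lieb algebra with loop parameter `2` has nonnegative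
structure constants in the basis `1, T₁, T₂, T₁T₂, T₂T₁`. The multiplicities of triples with
repetitions are handled by summing over all triples and dividing by `6`.

For a tridiagonal matrix almost all terms of the immanants vanish, and what remains are products of
entries and the contiguous minors of orders two and three (`good_tri`). Each of the five conditions
provides `q`-nonnegative `x`, `y` with `s_k ≥_q x_k + y_k` and `r_k t_{k+1} = x_{k+1} y_k`
(`Split`), which makes those minors `q`-nonnegative. Row `n + 1` of the Catalan–Stieltjes matrix is
row `n` times the tridiagonal matrix, so the property passes to the Catalan–Stieltjes matrix by
induction on the first row index (`good_cs`). `Split` is symmetric under transposition, and the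
Hankel matrix is the product of the Catalan–Stieltjes matrix and the transpose of the one belonging
to the transposed tridiagonal matrix (`hankel`).
-/

open Polynomial

/-- A polynomial is `q`-nonnegative if all of its coefficients are nonnegative. -/
def QNonneg (f : Polynomial ℝ) : Prop := ∀ i, 0 ≤ f.coeff i

namespace CatalanLike

/-! ### The cone of `q`-nonnegative polynomials -/

lemma qn_add {f g : ℝ[X]} (hf : QNonneg f) (hg : QNonneg g) : QNonneg (f + g) := by
  intro i
  rw [coeff_add]
  exact add_nonneg (hf i) (hg i)

lemma qn_zero : QNonneg 0 := fun i => by simp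

lemma qn_one : QNonneg 1 := fun i => by
  rw [coeff_one]
  split_ifs <;> norm_num

lemma qn_mul {f g : ℝ[X]} (hf : QNonneg f) (hg : QNonneg g) : QNonneg (f * g) := by
  intro i
  rw [coeff_mul]
  exact Finset.sum_nonneg fun p _ => mul_nonneg (hf _) (hg _)

lemma qn_two : QNonneg 2 := by
  rw [← one_add_one_eq_two]
  exact qn_add qn_one qn_one

lemma qn_sum {ι : Type*} (S : Finset ι) (f : ι → ℝ[X]) (h : ∀ i ∈ S, QNonneg (f i)) :
    QNonneg (∑ i ∈ S, f i) := by
  intro i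
  rw [finsetSum_coeff]
  exact Finset.sum_nonneg fun p hp => h p hp i

lemma qn_of_natCast_mul {n : ℕ} (hn : 0 < n) {f : ℝ[X]} (h : QNonneg ((n : ℝ[X]) * f)) :
    QNonneg f := by
  intro i
  have h1 := h i
  rw [← C_eq_natCast, coeff_C_mul] at h1
  exact nonneg_of_mul_nonneg_right h1 (by exact_mod_cast hn)

/-! ### Temperley–Lieb immanants of `3 × 3` matrices -/

/-- The immanant `∑ w, c_w ∏ a, M a (w a)` of a `3 × 3` matrix. The six coefficients belong to
`e, s₁, s₂, s₁s₂, s₂s₁, s₁s₂s₁`, in this order. -/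
noncomputable def imm (c₀ c₁ c₂ c₃ c₄ c₅ : ℝ[X]) (M : Fin 3 → Fin 3 → ℝ[X]) : ℝ[X] :=
  c₀ * (M 0 0 * M 1 1 * M 2 2) + c₁ * (M 0 1 * M 1 0 * M 2 2) + c₂ * (M 0 0 * M 1 2 * M 2 1) +
    c₃ * (M 0 1 * M 1 2 * M 2 0) + c₄ * (M 0 2 * M 1 0 * M 2 1) + c₅ * (M 0 2 * M 1 1 * M 2 0)

/-- All five Temperley–Lieb immanants of the `3 × 3` matrix `M` are `q`-nonnegative: these are the
coordinates of `∑ w, (∏ a, M a (w a)) w` in the basis `1, T₁, T₂, T₁T₂, T₂T₁` of the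
Temperley–Lieb algebra with loop parameter `2`, where `s_i` is sent to `T_i - 1`. -/
structure TLNonneg (M : Fin 3 → Fin 3 → ℝ[X]) : Prop where
  one : QNonneg (imm 1 (-1) (-1) 1 1 (-1) M)
  T1 : QNonneg (imm 0 1 0 (-1) (-1) 1 M)
  T2 : QNonneg (imm 0 0 1 (-1) (-1) 1 M)
  T12 : QNonneg (imm 0 0 0 1 0 (-1) M)
  T21 : QNonneg (imm 0 0 0 0 1 (-1) M)

lemma sum_sorted_nonneg (N : ℕ) (G : ℕ → ℕ → ℕ → ℝ[X]) (h₁ : ∀ x y z, G x y z = G y x z)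
    (h₂ : ∀ x y z, G x y z = G x z y) (h : ∀ x y z, x ≤ y → y ≤ z → QNonneg (G x y z)) :
    QNonneg (∑ x ∈ Finset.range N, ∑ y ∈ Finset.range N, ∑ z ∈ Finset.range N, G x y z) := by
  refine qn_sum _ _ fun x _ => qn_sum _ _ fun y _ => qn_sum _ _ fun z _ => ?_
  rcases le_total x y with hxy | hxy <;> rcases le_total y z with hyz | hyz <;>
    rcases le_total x z with hxz | hxz
  · exact h _ _ _ hxy hyz
  · exact h _ _ _ hxy hyz
  · rw [h₂]; exact h _ _ _ hxz hyz
  · rw [h₂, h₁]; exact h _ _ _ hxz hxy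
  · rw [h₁]; exact h _ _ _ hxy hxz
  · rw [h₁, h₂]; exact h _ _ _ hyz hxz
  · rw [h₁, h₂, h₁]; exact h _ _ _ hyz hxy
  · rw [h₁, h₂, h₁]; exact h _ _ _ hyz hxy

lemma prod_sum₃ (N : ℕ) (f g h : ℕ → ℝ[X]) :
    (∑ x ∈ Finset.range N, f x) * (∑ y ∈ Finset.range N, g y) * (∑ z ∈ Finset.range N, h z) =
      ∑ x ∈ Finset.range N, ∑ y ∈ Finset.range N, ∑ z ∈ Finset.range N, f x * g y * h z := by
  rw [Finset.sum_mul_sum, Finset.sum_mul]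
  refine Finset.sum_congr rfl fun x _ => ?_
  rw [Finset.sum_mul]
  refine Finset.sum_congr rfl fun y _ => ?_
  rw [Finset.mul_sum]

/-- An immanant is linear in each row, so an immanant of a matrix product is a sum over triples of
intermediate indices. -/
lemma imm_mul (c₀ c₁ c₂ c₃ c₄ c₅ : ℝ[X]) (N : ℕ) (A : Fin 3 → ℕ → ℝ[X]) (B : ℕ → Fin 3 → ℝ[X]) :
    imm c₀ c₁ c₂ c₃ c₄ c₅ (fun a b => ∑ j ∈ Finset.range N, A a j * B j b) =
      ∑ x ∈ Finset.range N, ∑ y ∈ Finset.range N, ∑ z ∈ Finset.range N,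
        A 0 x * A 1 y * A 2 z * imm c₀ c₁ c₂ c₃ c₄ c₅ (fun a b => B (![x, y, z] a) b) := by
  simp only [imm]
  simp only [prod_sum₃]
  simp only [Finset.mul_sum, ← Finset.sum_add_distrib]
  refine Finset.sum_congr rfl fun x _ => Finset.sum_congr rfl fun y _ =>
    Finset.sum_congr rfl fun z _ => ?_
  simp only [Matrix.cons_val]
  ring

/-- Sum of the contributions to `imm_mul` of the six orderings of a triple. -/
noncomputable def symTerm (c₀ c₁ c₂ c₃ c₄ c₅ : ℝ[X]) (A : Fin 3 → ℕ → ℝ[X]) (B : ℕ → Fin 3 → ℝ[X])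
    (x y z : ℕ) : ℝ[X] :=
  A 0 x * A 1 y * A 2 z * imm c₀ c₁ c₂ c₃ c₄ c₅ (fun a b => B (![x, y, z] a) b) +
  A 0 y * A 1 x * A 2 z * imm c₀ c₁ c₂ c₃ c₄ c₅ (fun a b => B (![y, x, z] a) b) +
  A 0 x * A 1 z * A 2 y * imm c₀ c₁ c₂ c₃ c₄ c₅ (fun a b => B (![x, z, y] a) b) +
  A 0 y * A 1 z * A 2 x * imm c₀ c₁ c₂ c₃ c₄ c₅ (fun a b => B (![y, z, x] a) b) +
  A 0 z * A 1 x * A 2 y * imm c₀ c₁ c₂ c₃ c₄ c₅ (fun a b => B (![z, x, y] a) b) +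
  A 0 z * A 1 y * A 2 x * imm c₀ c₁ c₂ c₃ c₄ c₅ (fun a b => B (![z, y, x] a) b)

lemma six_sum (N : ℕ) (F : ℕ → ℕ → ℕ → ℝ[X]) :
    ((6 : ℕ) : ℝ[X]) * (∑ x ∈ Finset.range N, ∑ y ∈ Finset.range N, ∑ z ∈ Finset.range N, F x y z) =
    ∑ x ∈ Finset.range N, ∑ y ∈ Finset.range N, ∑ z ∈ Finset.range N,
      (F x y z + F y x z + F x z y + F y z x + F z x y + F z y x) := by
  have e₁ : ∀ F : ℕ → ℕ → ℕ → ℝ[X], ∑ x ∈ Finset.range N, ∑ y ∈ Finset.range N,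
      ∑ z ∈ Finset.range N, F y x z = ∑ x ∈ Finset.range N, ∑ y ∈ Finset.range N,
      ∑ z ∈ Finset.range N, F x y z := fun F => Finset.sum_comm
  have e₂ : ∀ F : ℕ → ℕ → ℕ → ℝ[X], ∑ x ∈ Finset.range N, ∑ y ∈ Finset.range N,
      ∑ z ∈ Finset.range N, F x z y = ∑ x ∈ Finset.range N, ∑ y ∈ Finset.range N,
      ∑ z ∈ Finset.range N, F x y z :=
    fun F => Finset.sum_congr rfl fun x _ => Finset.sum_comm
  simp only [Finset.sum_add_distrib]
  have e₃ := e₁ fun x y z => F x z y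
  have e₄ := e₂ fun x y z => F y x z
  have e₅ := e₁ fun x y z => F z x y
  rw [e₅, e₄, e₃, e₁ F, e₂ F]
  push_cast
  ring

lemma imm_mul_nonneg (c₀ c₁ c₂ c₃ c₄ c₅ : ℝ[X]) (N : ℕ) (A : Fin 3 → ℕ → ℝ[X])
    (B : ℕ → Fin 3 → ℝ[X])
    (h : ∀ x y z, x ≤ y → y ≤ z → QNonneg (symTerm c₀ c₁ c₂ c₃ c₄ c₅ A B x y z)) :
    QNonneg (imm c₀ c₁ c₂ c₃ c₄ c₅ (fun a b => ∑ j ∈ Finset.range N, A a j * B j b)) := by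
  apply qn_of_natCast_mul (n := 6) (by norm_num)
  rw [imm_mul, six_sum N (fun x y z => A 0 x * A 1 y * A 2 z *
    imm c₀ c₁ c₂ c₃ c₄ c₅ (fun a b => B (![x, y, z] a) b))]
  exact sum_sorted_nonneg N (symTerm c₀ c₁ c₂ c₃ c₄ c₅ A B)
    (fun x y z => by simp only [symTerm]; ring) (fun x y z => by simp only [symTerm]; ring) h

/-- Temperley–Lieb nonnegativity is multiplicative: for a weakly increasing triple of intermediate
indices, the symmetrized summand is the product of two elements of the Temperley–Lieb algebra (the one of
`B` times the one of `A`, as permutations compose from right to left), whose structure constants in the basis `1, T₁, T₂, T₁T₂, T₂T₁` are nonnegative. -/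
lemma TLNonneg.mul (N : ℕ) (A : Fin 3 → ℕ → ℝ[X]) (B : ℕ → Fin 3 → ℝ[X])
    (hA : ∀ x y z, x ≤ y → y ≤ z → TLNonneg (fun a b => A a (![x, y, z] b)))
    (hB : ∀ x y z, x ≤ y → y ≤ z → TLNonneg (fun a b => B (![x, y, z] a) b)) :
    TLNonneg (fun a b => ∑ j ∈ Finset.range N, A a j * B j b) := by
  constructor <;> refine imm_mul_nonneg _ _ _ _ _ _ _ _ _ fun x y z hxy hyz => ?_ <;>
    obtain ⟨g, g₁, g₂, g₁₂, g₂₁⟩ := hA x y z hxy hyz <;>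
    obtain ⟨f, f₁, f₂, f₁₂, f₂₁⟩ := hB x y z hxy hyz
  · convert qn_mul f g using 1
    simp only [symTerm, imm, Matrix.cons_val]
    ring
  · have key := qn_add (qn_add (qn_add (qn_add (qn_add (qn_mul f g₁) (qn_mul f₁ g))
      (qn_mul qn_two (qn_mul f₁ g₁))) (qn_mul f₁ g₂₁)) (qn_mul f₁₂ g₁))
      (qn_mul qn_two (qn_mul f₁₂ g₂₁))
    convert key using 1
    simp only [symTerm, imm, Matrix.cons_val]
    ring
  · have key := qn_add (qn_add (qn_add (qn_add (qn_add (qn_mul f g₂) (qn_mul f₂ g))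
      (qn_mul qn_two (qn_mul f₂ g₂))) (qn_mul f₂ g₁₂)) (qn_mul f₂₁ g₂))
      (qn_mul qn_two (qn_mul f₂₁ g₁₂))
    convert key using 1
    simp only [symTerm, imm, Matrix.cons_val]
    ring
  · have key := qn_add (qn_add (qn_add (qn_add (qn_add (qn_mul f g₁₂) (qn_mul f₁₂ g))
      (qn_mul f₁ g₂)) (qn_mul qn_two (qn_mul f₁ g₁₂))) (qn_mul qn_two (qn_mul f₁₂ g₂)))
      (qn_mul f₁₂ g₁₂)
    convert key using 1
    simp only [symTerm, imm, Matrix.cons_val]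
    ring
  · have key := qn_add (qn_add (qn_add (qn_add (qn_add (qn_mul f g₂₁) (qn_mul f₂₁ g))
      (qn_mul f₂ g₁)) (qn_mul qn_two (qn_mul f₂ g₂₁))) (qn_mul qn_two (qn_mul f₂₁ g₁)))
      (qn_mul f₂₁ g₂₁)
    convert key using 1
    simp only [symTerm, imm, Matrix.cons_val]
    ring

/-- The Cauchy–Binet argument for minors of order two. -/
lemma minor_mul (N : ℕ) (a a' b b' : ℕ → ℝ[X])
    (ha : ∀ x y, x ≤ y → QNonneg (a x * a' y - a y * a' x))
    (hb : ∀ x y, x ≤ y → QNonneg (b x * b' y - b y * b' x)) :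
    QNonneg ((∑ j ∈ Finset.range N, a j * b j) * (∑ j ∈ Finset.range N, a' j * b' j) -
      (∑ j ∈ Finset.range N, a j * b' j) * (∑ j ∈ Finset.range N, a' j * b j)) := by
  have e : ((2 : ℕ) : ℝ[X]) * ((∑ j ∈ Finset.range N, a j * b j) *
      (∑ j ∈ Finset.range N, a' j * b' j) -
      (∑ j ∈ Finset.range N, a j * b' j) * (∑ j ∈ Finset.range N, a' j * b j)) =
      ∑ x ∈ Finset.range N, ∑ y ∈ Finset.range N,
        (a x * a' y - a y * a' x) * (b x * b' y - b y * b' x) := by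
    have h : ∑ x ∈ Finset.range N, ∑ y ∈ Finset.range N,
        (a x * a' y - a y * a' x) * (b x * b' y - b y * b' x) =
      ∑ x ∈ Finset.range N, ∑ y ∈ Finset.range N,
        ((a x * b x) * (a' y * b' y) + (a' x * b' x) * (a y * b y)
          - (a x * b' x) * (a' y * b y) - (a' x * b x) * (a y * b' y)) :=
      Finset.sum_congr rfl fun x _ => Finset.sum_congr rfl fun y _ => by ring
    rw [h]
    simp only [Finset.sum_sub_distrib, Finset.sum_add_distrib, ← Finset.sum_mul_sum]
    push_cast
    ring
  apply qn_of_natCast_mul (n := 2) (by norm_num)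
  rw [e]
  refine qn_sum _ _ fun x _ => qn_sum _ _ fun y _ => ?_
  rcases le_total x y with h | h
  · exact qn_mul (ha x y h) (hb x y h)
  · convert qn_mul (ha y x h) (hb y x h) using 1
    ring

/-! ### Matrices with Temperley–Lieb nonnegative submatrices -/

/-- An infinite matrix whose entries, minors of order two and Temperley–Lieb immanants of order
three are all `q`-nonnegative. Repeated row and column indices are allowed, since they occur among
the intermediate indices of a product. -/
structure Good (A : ℕ → ℕ → ℝ[X]) : Prop where
  entry : ∀ i k, QNonneg (A i k)
  minor : ∀ i i' k k', i ≤ i' → k ≤ k' → QNonneg (A i k * A i' k' - A i k' * A i' k)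
  tl : ∀ i₁ i₂ i₃ k₁ k₂ k₃, i₁ ≤ i₂ → i₂ ≤ i₃ → k₁ ≤ k₂ → k₂ ≤ k₃ →
    TLNonneg (fun a b => A (![i₁, i₂, i₃] a) (![k₁, k₂, k₃] b))

lemma minor_of_strict (A : ℕ → ℕ → ℝ[X]) {i i' k k' : ℕ} (hi : i ≤ i') (hk : k ≤ k')
    (h : i < i' → k < k' → QNonneg (A i k * A i' k' - A i k' * A i' k)) :
    QNonneg (A i k * A i' k' - A i k' * A i' k) := by
  rcases hi.eq_or_lt with rfl | hi
  · convert qn_zero using 1; ring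
  rcases hk.eq_or_lt with rfl | hk
  · convert qn_zero using 1; ring
  exact h hi hk

/-- The immanants of `T₁T₂` and `T₂T₁` are products of an entry and a minor, and if two rows or
columns coincide, so are those of `T₁` and `T₂`, or they vanish. Hence only three immanants of
genuine submatrices have to be checked. -/
lemma tl_of_strict (A : ℕ → ℕ → ℝ[X]) (he : ∀ i k, QNonneg (A i k))
    (hm : ∀ i i' k k', i ≤ i' → k ≤ k' → QNonneg (A i k * A i' k' - A i k' * A i' k))
    {i₁ i₂ i₃ k₁ k₂ k₃ : ℕ} (hi : i₁ ≤ i₂) (hi' : i₂ ≤ i₃) (hk : k₁ ≤ k₂) (hk' : k₂ ≤ k₃)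
    (h : i₁ < i₂ → i₂ < i₃ → k₁ < k₂ → k₂ < k₃ →
      QNonneg (A i₁ k₁ * A i₂ k₂ * A i₃ k₃ - A i₁ k₂ * A i₂ k₁ * A i₃ k₃
        - A i₁ k₁ * A i₂ k₃ * A i₃ k₂ + A i₁ k₂ * A i₂ k₃ * A i₃ k₁ + A i₁ k₃ * A i₂ k₁ * A i₃ k₂
        - A i₁ k₃ * A i₂ k₂ * A i₃ k₁) ∧
      QNonneg (A i₁ k₂ * A i₂ k₁ * A i₃ k₃ - A i₁ k₂ * A i₂ k₃ * A i₃ k₁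
        - A i₁ k₃ * A i₂ k₁ * A i₃ k₂ + A i₁ k₃ * A i₂ k₂ * A i₃ k₁) ∧
      QNonneg (A i₁ k₁ * A i₂ k₃ * A i₃ k₂ - A i₁ k₂ * A i₂ k₃ * A i₃ k₁
        - A i₁ k₃ * A i₂ k₁ * A i₃ k₂ + A i₁ k₃ * A i₂ k₂ * A i₃ k₁)) :
    TLNonneg (fun a b => A (![i₁, i₂, i₃] a) (![k₁, k₂, k₃] b)) := by
  have h12 : QNonneg (imm 0 0 0 1 0 (-1) (fun a b => A (![i₁, i₂, i₃] a) (![k₁, k₂, k₃] b))) := by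
    convert qn_mul (he i₃ k₁) (hm i₁ i₂ k₂ k₃ hi hk') using 1
    simp only [imm, Matrix.cons_val]
    ring
  have h21 : QNonneg (imm 0 0 0 0 1 (-1) (fun a b => A (![i₁, i₂, i₃] a) (![k₁, k₂, k₃] b))) := by
    convert qn_mul (he i₁ k₃) (hm i₂ i₃ k₁ k₂ hi' hk) using 1
    simp only [imm, Matrix.cons_val]
    ring
  suffices hs : QNonneg (A i₁ k₁ * A i₂ k₂ * A i₃ k₃ - A i₁ k₂ * A i₂ k₁ * A i₃ k₃
        - A i₁ k₁ * A i₂ k₃ * A i₃ k₂ + A i₁ k₂ * A i₂ k₃ * A i₃ k₁ + A i₁ k₃ * A i₂ k₁ * A i₃ k₂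
        - A i₁ k₃ * A i₂ k₂ * A i₃ k₁) ∧
      QNonneg (A i₁ k₂ * A i₂ k₁ * A i₃ k₃ - A i₁ k₂ * A i₂ k₃ * A i₃ k₁
        - A i₁ k₃ * A i₂ k₁ * A i₃ k₂ + A i₁ k₃ * A i₂ k₂ * A i₃ k₁) ∧
      QNonneg (A i₁ k₁ * A i₂ k₃ * A i₃ k₂ - A i₁ k₂ * A i₂ k₃ * A i₃ k₁
        - A i₁ k₃ * A i₂ k₁ * A i₃ k₂ + A i₁ k₃ * A i₂ k₂ * A i₃ k₁) by
    obtain ⟨a, b, c⟩ := hs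
    refine ⟨?_, ?_, ?_, h12, h21⟩
    · convert a using 1
      simp only [imm, Matrix.cons_val]
      ring
    · convert b using 1
      simp only [imm, Matrix.cons_val]
      ring
    · convert c using 1
      simp only [imm, Matrix.cons_val]
      ring
  rcases hi.eq_or_lt with rfl | hi1
  · refine ⟨?_, ?_, ?_⟩
    · convert qn_zero using 1; ring
    · convert qn_mul (he i₁ k₁) (hm i₁ i₃ k₂ k₃ hi' hk') using 1; ring
    · convert qn_zero using 1; ring
  rcases hi'.eq_or_lt with rfl | hi2
  · refine ⟨?_, ?_, ?_⟩
    · convert qn_zero using 1; ring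
    · convert qn_zero using 1; ring
    · convert qn_mul (he i₂ k₃) (hm i₁ i₂ k₁ k₂ hi hk) using 1; ring
  rcases hk.eq_or_lt with rfl | hk1
  · refine ⟨?_, ?_, ?_⟩
    · convert qn_zero using 1; ring
    · convert qn_mul (he i₁ k₁) (hm i₂ i₃ k₁ k₃ hi' hk') using 1; ring
    · convert qn_zero using 1; ring
  rcases hk'.eq_or_lt with rfl | hk2
  · refine ⟨?_, ?_, ?_⟩
    · convert qn_zero using 1; ring
    · convert qn_zero using 1; ring
    · convert qn_mul (he i₃ k₂) (hm i₁ i₂ k₁ k₂ hi hk) using 1; ring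
  exact h hi1 hi2 hk1 hk2

/-- Transposition only exchanges the immanants of `T₁T₂` and `T₂T₁`. -/
lemma Good.transpose {A : ℕ → ℕ → ℝ[X]} (h : Good A) : Good (fun i k => A k i) where
  entry i k := h.entry k i
  minor i i' k k' hi hk := by
    convert h.minor k k' i i' hk hi using 1
    ring
  tl i₁ i₂ i₃ k₁ k₂ k₃ hi hi' hk hk' := by
    obtain ⟨f, f₁, f₂, f₁₂, f₂₁⟩ := h.tl k₁ k₂ k₃ i₁ i₂ i₃ hk hk' hi hi'
    refine ⟨?_, ?_, ?_, ?_, ?_⟩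
    · convert f using 1; simp only [imm]; ring
    · convert f₁ using 1; simp only [imm]; ring
    · convert f₂ using 1; simp only [imm]; ring
    · convert f₂₁ using 1; simp only [imm]; ring
    · convert f₁₂ using 1; simp only [imm]; ring

/-! ### The tridiagonal production matrix -/

/-- The tridiagonal matrix with superdiagonal `r`, diagonal `s` and subdiagonal `u`. -/
noncomputable def tri (r s u : ℕ → ℝ[X]) (l k : ℕ) : ℝ[X] :=
  (if k = l + 1 then r l else 0) + (if k = l then s l else 0) + (if l = k + 1 then u k else 0)

lemma tri_swap (r s u : ℕ → ℝ[X]) (l k : ℕ) : tri u s r l k = tri r s u k l := by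
  unfold tri
  by_cases h : k = l
  · subst h; simp
  · rw [if_neg h, if_neg (Ne.symm h)]; ring

lemma tri_diag (r s u : ℕ → ℝ[X]) (k : ℕ) : tri r s u k k = s k := by simp [tri]
lemma tri_sup (r s u : ℕ → ℝ[X]) (k : ℕ) : tri r s u k (k + 1) = r k := by
  simp [tri]
  omega

lemma tri_sub (r s u : ℕ → ℝ[X]) (k : ℕ) : tri r s u (k + 1) k = u k := by
  simp [tri]
  omega


lemma tri_zero (r s u : ℕ → ℝ[X]) {l k : ℕ} (h : l + 1 < k ∨ k + 1 < l) : tri r s u l k = 0 := by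
  unfold tri
  rw [if_neg (by omega), if_neg (by omega), if_neg (by omega)]
  simp

/-- The common form of the five sufficient conditions: `s k ≥_q x k + y k` with
`r k * u k = x (k + 1) * y k`, for `q`-nonnegative `x` and `y`. -/
def Split (r s u : ℕ → ℝ[X]) : Prop :=
  ∃ x y e : ℕ → ℝ[X], (∀ k, QNonneg (x k)) ∧ (∀ k, QNonneg (y k)) ∧ (∀ k, QNonneg (e k)) ∧
    (∀ k, s k = x k + y k + e k) ∧ ∀ k, r k * u k = x (k + 1) * y k

lemma Split.swap {r s u : ℕ → ℝ[X]} (h : Split r s u) : Split u s r := by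
  obtain ⟨x, y, e, hx, hy, he, hs, hp⟩ := h
  exact ⟨x, y, e, hx, hy, he, hs, fun k => by rw [mul_comm, hp]⟩

lemma Split.diag_nonneg {r s u : ℕ → ℝ[X]} (h : Split r s u) (k : ℕ) : QNonneg (s k) := by
  obtain ⟨x, y, e, hx, hy, he, hs, hp⟩ := h
  rw [hs]
  exact qn_add (qn_add (hx k) (hy k)) (he k)

lemma Split.det₂ {r s u : ℕ → ℝ[X]} (h : Split r s u) (k : ℕ) :
    QNonneg (s k * s (k + 1) - r k * u k) := by
  have hs' := h.diag_nonneg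
  obtain ⟨x, y, e, hx, hy, he, hs, hp⟩ := h
  convert qn_add (qn_mul (qn_add (hx k) (he k)) (hs' (k + 1)))
    (qn_mul (hy k) (qn_add (hy (k + 1)) (he (k + 1)))) using 1
  rw [hp, hs k, hs (k + 1)]
  ring

lemma Split.det₃ {r s u : ℕ → ℝ[X]} (h : Split r s u) (k : ℕ) :
    QNonneg (s k * s (k + 1) * s (k + 2) - r k * u k * s (k + 2)
      - s k * (r (k + 1) * u (k + 1))) := by
  have hs' := h.diag_nonneg
  obtain ⟨x, y, e, hx, hy, he, hs, hp⟩ := h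
  -- expand the middle factor as `x + y + e` and pair `x` with `y k`, and `y` with `x (k + 2)`
  convert qn_add (qn_add (qn_mul (qn_mul (hs' k) (he (k + 1))) (hs' (k + 2)))
    (qn_mul (qn_mul (hx (k + 1)) (hs' (k + 2))) (qn_add (hx k) (he k))))
    (qn_mul (qn_mul (hy (k + 1)) (hs' k)) (qn_add (hy (k + 2)) (he (k + 2)))) using 1
  rw [hp, hp, hs k, hs (k + 1), hs (k + 2)]
  ring

lemma good_tri {r s u : ℕ → ℝ[X]} (hr : ∀ k, QNonneg (r k)) (hu : ∀ k, QNonneg (u k))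
    (h : Split r s u) : Good (tri r s u) := by
  have he : ∀ i k, QNonneg (tri r s u i k) := by
    intro i k
    unfold tri
    refine qn_add (qn_add ?_ ?_) ?_ <;> split_ifs
    exacts [hr _, qn_zero, h.diag_nonneg _, qn_zero, hu _, qn_zero]
  have hm : ∀ i i' k k', i ≤ i' → k ≤ k' →
      QNonneg (tri r s u i k * tri r s u i' k' - tri r s u i k' * tri r s u i' k) := by
    intro i i' k k' hi hk
    refine minor_of_strict _ hi hk fun hi hk => ?_
    by_cases hc : i = k ∧ i' = i + 1 ∧ k' = i + 1
    · obtain ⟨rfl, rfl, rfl⟩ := hc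
      rw [tri_diag, tri_diag, tri_sup, tri_sub]
      exact h.det₂ _
    · have hz : tri r s u i k' * tri r s u i' k = 0 := by
        by_cases h1 : i + 1 < k'
        · rw [tri_zero r s u (.inl h1), zero_mul]
        · rw [tri_zero r s u (l := i') (k := k) (.inr (by omega)), mul_zero]
      rw [hz, sub_zero]
      exact qn_mul (he _ _) (he _ _)
  refine ⟨he, hm, fun i₁ i₂ i₃ k₁ k₂ k₃ hi hi' hk hk' =>
    tl_of_strict _ he hm hi hi' hk hk' fun hi hi' hk hk' => ?_⟩
  -- a nonzero corner entry forces the opposite corner and its neighbours to vanish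
  have z₁ : tri r s u i₁ k₃ * tri r s u i₃ k₂ = 0 := by
    by_cases h1 : i₁ + 1 < k₃
    · rw [tri_zero r s u (.inl h1), zero_mul]
    · rw [tri_zero r s u (l := i₃) (k := k₂) (.inr (by omega)), mul_zero]
  have z₂ : tri r s u i₁ k₃ * tri r s u i₃ k₁ = 0 := by
    by_cases h1 : i₁ + 1 < k₃
    · rw [tri_zero r s u (.inl h1), zero_mul]
    · rw [tri_zero r s u (l := i₃) (k := k₁) (.inr (by omega)), mul_zero]
  have z₃ : tri r s u i₂ k₃ * tri r s u i₃ k₁ = 0 := by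
    by_cases h1 : i₂ + 1 < k₃
    · rw [tri_zero r s u (.inl h1), zero_mul]
    · rw [tri_zero r s u (l := i₃) (k := k₁) (.inr (by omega)), mul_zero]
  refine ⟨?_, ?_, ?_⟩
  · by_cases hc : i₁ = k₁ ∧ i₂ = i₁ + 1 ∧ k₂ = i₁ + 1
    · obtain ⟨rfl, rfl, rfl⟩ := hc
      by_cases hc : i₃ = i₁ + 2 ∧ k₃ = i₁ + 2
      · obtain ⟨rfl, rfl⟩ := hc
        convert h.det₃ i₁ using 1
        have e1 := tri_sup r s u (i₁ + 1)
        have e2 := tri_sub r s u (i₁ + 1)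
        rw [show i₁ + 1 + 1 = i₁ + 2 from rfl] at e1 e2
        rw [e1, e2] at *
        simp only [tri_diag, tri_sup, tri_sub] at *
        linear_combination (r i₁) * z₃ + (u i₁) * z₁ - (s (i₁ + 1)) * z₂
      · have z₄ : tri r s u (i₁ + 1) k₃ * tri r s u i₃ (i₁ + 1) = 0 := by
          by_cases h1 : i₁ + 2 < k₃
          · rw [tri_zero r s u (.inl h1), zero_mul]
          · rw [tri_zero r s u (l := i₃) (.inr (by omega)), mul_zero]
        convert qn_mul (he i₃ k₃) (hm i₁ (i₁ + 1) i₁ (i₁ + 1) hi.le hk.le) using 1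
        linear_combination (tri r s u i₁ (i₁ + 1)) * z₃ + (tri r s u (i₁ + 1) i₁) * z₁
          - (tri r s u (i₁ + 1) (i₁ + 1)) * z₂ - (tri r s u i₁ i₁) * z₄
    · have z₄ : tri r s u i₁ k₂ * tri r s u i₂ k₁ = 0 := by
        by_cases h1 : i₁ + 1 < k₂
        · rw [tri_zero r s u (.inl h1), zero_mul]
        · rw [tri_zero r s u (l := i₂) (k := k₁) (.inr (by omega)), mul_zero]
      convert qn_mul (he i₁ k₁) (hm i₂ i₃ k₂ k₃ hi'.le hk'.le) using 1
      linear_combination (tri r s u i₁ k₂) * z₃ + (tri r s u i₂ k₁) * z₁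
          - (tri r s u i₂ k₂) * z₂ - (tri r s u i₃ k₃) * z₄
  · convert qn_mul (qn_mul (he i₁ k₂) (he i₂ k₁)) (he i₃ k₃) using 1
    linear_combination (-tri r s u i₁ k₂) * z₃ - (tri r s u i₂ k₁) * z₁ + (tri r s u i₂ k₂) * z₂
  · convert qn_mul (qn_mul (he i₁ k₁) (he i₂ k₃)) (he i₃ k₂) using 1
    linear_combination (-tri r s u i₁ k₂) * z₃ - (tri r s u i₂ k₁) * z₁ + (tri r s u i₂ k₂) * z₂

/-! ### Catalan–Stieltjes matrices -/

/-- The Catalan–Stieltjes matrix with `t (k + 1)` written as `u k`: row `n` is the first row of the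
`n`-th power of `tri r s u`. -/
noncomputable def cs (r s u : ℕ → ℝ[X]) : ℕ → ℕ → ℝ[X]
  | 0, k => if k = 0 then 1 else 0
  | n + 1, 0 => s 0 * cs r s u n 0 + u 0 * cs r s u n 1
  | n + 1, k + 1 =>
      r k * cs r s u n k + s (k + 1) * cs r s u n (k + 1) + u (k + 1) * cs r s u n (k + 2)

lemma cs_upper (r s u : ℕ → ℝ[X]) (n k : ℕ) (h : n < k) : cs r s u n k = 0 := by
  induction n generalizing k with
  | zero => simp [cs, h.ne']
  | succ n ih =>
    obtain ⟨k, rfl⟩ : ∃ m, k = m + 1 := ⟨k - 1, by omega⟩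
    simp [cs, ih k (by omega), ih (k + 1) (by omega), ih (k + 2) (by omega)]

lemma cs_succ (r s u : ℕ → ℝ[X]) (n k N : ℕ) (h : n < N) :
    cs r s u (n + 1) k = ∑ l ∈ Finset.range N, cs r s u n l * tri r s u l k := by
  have out : ∀ l (v : ℝ[X]), (if l ∈ Finset.range N then cs r s u n l * v else 0) =
      cs r s u n l * v := by
    intro l v
    split_ifs with hl
    · rfl
    · rw [cs_upper r s u n l (by simp at hl; omega), zero_mul]
  cases k with
  | zero =>
    simp only [tri, mul_add, Finset.sum_add_distrib, mul_ite, mul_zero]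
    rw [Finset.sum_ite_eq, Finset.sum_ite_eq', out, out, cs]
    rw [Finset.sum_eq_zero (fun l _ => if_neg (by omega))]
    simp
    ring
  | succ k =>
    simp only [tri, mul_add, Finset.sum_add_distrib, mul_ite, mul_zero, add_left_inj]
    rw [Finset.sum_ite_eq, Finset.sum_ite_eq, Finset.sum_ite_eq', out, out, out, cs]
    ring

lemma good_cs {r s u : ℕ → ℝ[X]} (hr : ∀ k, QNonneg (r k)) (hu : ∀ k, QNonneg (u k))
    (h : Split r s u) : Good (cs r s u) := by
  have ht := good_tri hr hu h
  have he : ∀ i k, QNonneg (cs r s u i k) := by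
    intro i
    induction i with
    | zero => intro k; rw [cs]; split_ifs; exacts [qn_one, qn_zero]
    | succ n ih =>
      intro k
      rw [cs_succ r s u n k (n + 1) (by omega)]
      exact qn_sum _ _ fun l _ => qn_mul (ih l) (ht.entry l k)
  have z : ∀ k, 0 < k → cs r s u 0 k = 0 := fun k hk => cs_upper r s u 0 k hk
  have hm : ∀ i i' k k', i ≤ i' → k ≤ k' →
      QNonneg (cs r s u i k * cs r s u i' k' - cs r s u i k' * cs r s u i' k) := by
    intro i
    induction i with
    | zero =>
      intro i' k k' hi hk
      refine minor_of_strict _ hi hk fun hi hk => ?_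
      rw [z k' (by omega), zero_mul, sub_zero]
      exact qn_mul (he _ _) (he _ _)
    | succ n ih =>
      intro i' k k' hi hk
      obtain ⟨m, rfl⟩ : ∃ m, i' = m + 1 := ⟨i' - 1, by omega⟩
      simp only [fun k => cs_succ r s u n k (m + 1) (by omega),
        fun k => cs_succ r s u m k (m + 1) (by omega)]
      refine minor_mul (m + 1) (cs r s u n) (cs r s u m) (fun l => tri r s u l k)
        (fun l => tri r s u l k') (fun x y hxy => ih m x y (by omega) hxy) fun x y hxy => ?_
      convert ht.minor x y k k' hxy hk using 1
      ring
  refine ⟨he, hm, fun i₁ => ?_⟩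
  induction i₁ with
  | zero =>
    intro i₂ i₃ k₁ k₂ k₃ hi hi' hk hk'
    refine tl_of_strict _ he hm hi hi' hk hk' fun hi hi' hk hk' => ?_
    rw [z k₂ (by omega), z k₃ (by omega)]
    refine ⟨?_, ?_, ?_⟩
    · convert qn_mul (he 0 k₁) (hm i₂ i₃ k₂ k₃ hi'.le hk'.le) using 1
      ring
    · convert qn_zero using 1
      ring
    · convert qn_mul (qn_mul (he 0 k₁) (he i₂ k₃)) (he i₃ k₂) using 1
      ring
  | succ n ih =>
    intro i₂ i₃ k₁ k₂ k₃ hi hi' hk hk'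
    obtain ⟨m, rfl⟩ : ∃ m, i₂ = m + 1 := ⟨i₂ - 1, by omega⟩
    obtain ⟨p, rfl⟩ : ∃ m, i₃ = m + 1 := ⟨i₃ - 1, by omega⟩
    have key := TLNonneg.mul (p + 1) (fun a j => cs r s u (![n, m, p] a) j)
      (fun j b => tri r s u j (![k₁, k₂, k₃] b))
      (fun x y z hxy hyz => ih m p x y z (by omega) (by omega) hxy hyz)
      (fun x y z hxy hyz => ht.tl x y z k₁ k₂ k₃ hxy hyz hk hk')
    convert key using 1
    funext a b
    rw [← cs_succ r s u _ _ (p + 1) (by fin_cases a <;> simp <;> omega)]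
    congr 1
    fin_cases a <;> rfl

/-- The Hankel matrix factors through the Catalan–Stieltjes matrices of `tri r s u` and of its
transpose. -/
lemma hankel (r s u : ℕ → ℝ[X]) (i j N : ℕ) (h : i + j < N) :
    cs r s u (i + j) 0 = ∑ k ∈ Finset.range N, cs r s u i k * cs u s r j k := by
  induction j generalizing i with
  | zero =>
    have h0 : 0 ∈ Finset.range N := Finset.mem_range.2 (by omega)
    rw [Finset.sum_eq_single_of_mem 0 h0]
    · simp [cs]
    · intro k _ hk
      simp [cs, hk]
  | succ j ih =>
    rw [show i + (j + 1) = i + 1 + j by ring, ih (i + 1) (by omega)]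
    simp only [fun k => cs_succ r s u i k N (by omega), fun k => cs_succ u s r j k N (by omega),
      Finset.sum_mul, Finset.mul_sum, tri_swap r s u]
    rw [Finset.sum_comm]
    exact Finset.sum_congr rfl fun x _ => Finset.sum_congr rfl fun y _ => by ring

lemma tl_hankel {r s u : ℕ → ℝ[X]} (hr : ∀ k, QNonneg (r k)) (hu : ∀ k, QNonneg (u k))
    (h : Split r s u) {i₁ i₂ i₃ j₁ j₂ j₃ : ℕ} (hi : i₁ ≤ i₂) (hi' : i₂ ≤ i₃) (hj : j₁ ≤ j₂)
    (hj' : j₂ ≤ j₃) :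
    TLNonneg (fun a b => cs r s u (![i₁, i₂, i₃] a + ![j₁, j₂, j₃] b) 0) := by
  have key := TLNonneg.mul (i₃ + j₃ + 1) (fun a j => cs r s u (![i₁, i₂, i₃] a) j)
    (fun j b => cs u s r (![j₁, j₂, j₃] b) j)
    (fun x y z hxy hyz => (good_cs hr hu h).tl i₁ i₂ i₃ x y z hi hi' hxy hyz)
    (fun x y z hxy hyz => (good_cs hu hr h.swap).transpose.tl x y z j₁ j₂ j₃ hxy hyz hj hj')
  convert key using 1
  funext a b
  refine hankel r s u _ _ _ ?_
  fin_cases a <;> fin_cases b <;> simp <;> omega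

/-- To obtain `Split` it suffices to give `x` at positive indices, setting `x 0 = 0`. -/
lemma Split.of_shift {r s u : ℕ → ℝ[X]} (x' y : ℕ → ℝ[X]) (hx : ∀ k, QNonneg (x' k))
    (hy : ∀ k, QNonneg (y k)) (h0 : QNonneg (s 0 - y 0))
    (h1 : ∀ k, QNonneg (s (k + 1) - (x' k + y (k + 1)))) (hp : ∀ k, r k * u k = x' k * y k) :
    Split r s u := by
  refine ⟨fun k => Nat.casesOn k 0 x', y, fun k => s k - (Nat.casesOn k 0 x' + y k),
    fun k => ?_, hy, fun k => ?_, fun k => by ring, hp⟩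
  · cases k
    · exact qn_zero
    · exact hx _
  · cases k
    · simpa using h0
    · exact h1 _

lemma split_of_cond {r s t : ℕ → ℝ[X]} (hr : ∀ k, QNonneg (r k))
    (hu : ∀ k, QNonneg (t (k + 1)))
    (hcond : (QNonneg (s 0 - r 0) ∧ ∀ k, 1 ≤ k → QNonneg (s k - (r k + t k))) ∨
      (QNonneg (s 0 - t 1) ∧ ∀ k, 1 ≤ k → QNonneg (s k - (r (k - 1) + t (k + 1)))) ∨
      (QNonneg (s 0 - 1) ∧ ∀ k, 1 ≤ k → QNonneg (s k - (r (k - 1) * t k + 1))) ∨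
      (QNonneg (s 0 - r 0 * t 1) ∧ ∀ k, 1 ≤ k → QNonneg (s k - (r k * t (k + 1) + 1))) ∨
      (∃ b c' : ℕ → ℝ[X], (∀ k, QNonneg (b k)) ∧ (∀ k, QNonneg (c' k)) ∧
      ∀ k, r k = 1 ∧ s k = b k + c' k ∧ t (k + 1) = b (k + 1) * c' k)) :
    Split r s (fun k => t (k + 1)) := by
  rcases hcond with ⟨h0, h1⟩ | ⟨h0, h1⟩ | ⟨h0, h1⟩ | ⟨h0, h1⟩ | ⟨b, c', hb, hc', h⟩
  · refine Split.of_shift (fun k => t (k + 1)) r hu hr h0 (fun k => ?_) (fun k => mul_comm _ _)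
    have h2 := h1 (k + 1) (by omega)
    rwa [add_comm (r (k + 1))] at h2
  · refine Split.of_shift r (fun k => t (k + 1)) hr hu ?_ (fun k => ?_) (fun k => ?_)
    · simpa only [zero_add] using h0
    · simpa only [Nat.add_sub_cancel] using h1 (k + 1) (by omega)
    · ring
  · refine Split.of_shift (fun k => r k * t (k + 1)) (fun _ => 1)
      (fun k => qn_mul (hr k) (hu k)) (fun _ => qn_one) h0 (fun k => ?_) (fun k => ?_)
    · simpa only [Nat.add_sub_cancel] using h1 (k + 1) (by omega)
    · ring
  · refine Split.of_shift (fun _ => 1) (fun k => r k * t (k + 1)) (fun _ => qn_one)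
      (fun k => qn_mul (hr k) (hu k)) ?_ (fun k => ?_) (fun k => ?_)
    · simpa only [zero_add] using h0
    · have h2 := h1 (k + 1) (by omega)
      rwa [add_comm _ (1 : ℝ[X])] at h2
    · ring
  · refine Split.of_shift (fun k => b (k + 1)) c' (fun k => hb _) hc' ?_ (fun k => ?_) (fun k => ?_)
    · rw [(h 0).2.1, add_sub_cancel_right]
      exact hb 0
    · rw [(h (k + 1)).2.1, sub_self]
      exact qn_zero
    · rw [(h k).1, (h k).2.2, one_mul]

end CatalanLike

theorem stmt11 (r s t : ℕ → Polynomial ℝ) (c : ℕ → ℕ → Polynomial ℝ)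
    (hr : ∀ k, QNonneg (r k)) (hs : ∀ k, QNonneg (s k)) (ht : ∀ k, 1 ≤ k → QNonneg (t k))
    (hc00 : c 0 0 = 1)
    (hupper : ∀ n k, n < k → c n k = 0)
    (hrec0 : ∀ n, c (n + 1) 0 = s 0 * c n 0 + t 1 * c n 1)
    (hrec : ∀ n k, c (n + 1) (k + 1) =
      r k * c n k + s (k + 1) * c n (k + 1) + t (k + 2) * c n (k + 2))
    (hcond : (QNonneg (s 0 - r 0) ∧ ∀ k, 1 ≤ k → QNonneg (s k - (r k + t k))) ∨
      (QNonneg (s 0 - t 1) ∧ ∀ k, 1 ≤ k → QNonneg (s k - (r (k - 1) + t (k + 1)))) ∨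
      (QNonneg (s 0 - 1) ∧ ∀ k, 1 ≤ k → QNonneg (s k - (r (k - 1) * t k + 1))) ∨
      (QNonneg (s 0 - r 0 * t 1) ∧ ∀ k, 1 ≤ k → QNonneg (s k - (r k * t (k + 1) + 1))) ∨
      (∃ b c' : ℕ → Polynomial ℝ, (∀ k, QNonneg (b k)) ∧ (∀ k, QNonneg (c' k)) ∧
      ∀ k, r k = 1 ∧ s k = b k + c' k ∧ t (k + 1) = b (k + 1) * c' k))
    (i₁ i₂ i₃ j₁ j₂ j₃ : ℕ) (hi₁₂ : i₁ < i₂) (hi₂₃ : i₂ < i₃)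
    (hj₁₂ : j₁ < j₂) (hj₂₃ : j₂ < j₃) :
    QNonneg (2 * (c (i₁ + j₂) 0 * c (i₂ + j₁) 0 * c (i₃ + j₃) 0 +
                  c (i₁ + j₃) 0 * c (i₂ + j₂) 0 * c (i₃ + j₁) 0 +
                  c (i₁ + j₁) 0 * c (i₂ + j₃) 0 * c (i₃ + j₂) 0) -
             3 * (c (i₁ + j₂) 0 * c (i₂ + j₃) 0 * c (i₃ + j₁) 0 +
                  c (i₁ + j₃) 0 * c (i₂ + j₁) 0 * c (i₃ + j₂) 0)) := by
  have hu : ∀ k, QNonneg (t (k + 1)) := fun k => ht _ (by omega)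
  have hsplit := CatalanLike.split_of_cond hr hu hcond
  have hc : ∀ n k, c n k = CatalanLike.cs r s (fun k => t (k + 1)) n k := by
    intro n
    induction n with
    | zero =>
      intro k
      rw [CatalanLike.cs]
      split_ifs with hk
      · rw [hk, hc00]
      · exact hupper 0 k (by omega)
    | succ n ih =>
      intro k
      cases k with
      | zero => rw [hrec0, CatalanLike.cs, ih, ih]
      | succ k => rw [hrec, CatalanLike.cs, ih, ih, ih]
  obtain ⟨-, f₁, f₂, f₁₂, f₂₁⟩ :=
    CatalanLike.tl_hankel hr hu hsplit hi₁₂.le hi₂₃.le hj₁₂.le hj₂₃.le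
  convert CatalanLike.qn_add (CatalanLike.qn_mul CatalanLike.qn_two (CatalanLike.qn_add f₁ f₂))
    (CatalanLike.qn_add f₁₂ f₂₁) using 1
  simp only [hc, CatalanLike.imm, Matrix.cons_val]
  ring
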